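/- arXiv:1907.04740 — 7 statements merged into one kernel-verified Lean document; each statement's English description precedes it below -/
import Mathlib

section
/- Consider two agents with types 0 < q_1 ≤ q_2 and B = C > 0 in the proportional mechanism. Every pure Nash equilibrium (x_1, x_2) satisfies x_1 > 0, x_2 > 0, x_1·q_2 = x_2·q_1, and x_1 + x_2 = q_1·q_2/(q_1 + q_2). -/
/-!
With `B = C` there is no best response to the quality `0`: any positive quality takes the whole
budget, so halving it saves cost, while quality `0` is beaten by `q / 2`. Hence both qualities are
positive at an equilibrium. A positive best response `x` to `o > 0` satisfies the first-order
condition `(x + o) ^ 2 = q * o`. Writing `S = x1 + x2`, the two conditions are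
`S ^ 2 = q1 * x2` and `S ^ 2 = q2 * x1`; their equality is `x1 * q2 = x2 * q1`, and adding `q2` times
the first and `q1` times the second gives `S ^ 2 * (q1 + q2) = q1 * q2 * S`.
-/

/-- Utility of agent `i` (with own type `q`) in the proportional mechanism,
where `xi` is her own quality and `xo` is the other agent's quality:
`xi·B/(xi+xo) − xi·C/q`, and `0` when both qualities are `0`. -/
noncomputable def propU (B C q xi xo : ℝ) : ℝ :=
  if xi = 0 ∧ xo = 0 then 0 else xi * B / (xi + xo) - xi * C / q

/-- `(x1, x2)` is a pure Nash equilibrium of the two-agent proportional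
mechanism with types `q1, q2`, budget `B` and cost constant `C`. -/
noncomputable def IsPropNE (B C q1 q2 x1 x2 : ℝ) : Prop :=
  x1 ∈ Set.Icc 0 q1 ∧ x2 ∈ Set.Icc 0 q2 ∧
  (∀ y ∈ Set.Icc (0 : ℝ) q1, propU B C q1 y x2 ≤ propU B C q1 x1 x2) ∧
  (∀ y ∈ Set.Icc (0 : ℝ) q2, propU B C q2 y x1 ≤ propU B C q2 x2 x1)

lemma no_bestResponse_zero {C q x : ℝ} (hC : 0 < C) (hq : 0 < q) (hx : x ∈ Set.Icc 0 q)
    (h : ∀ y ∈ Set.Icc (0 : ℝ) q, propU C C q y 0 ≤ propU C C q x 0) : False := by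
  have val : ∀ y : ℝ, 0 < y → propU C C q y 0 = C - y * C / q := by
    intro y hy
    simp only [propU, hy.ne', false_and, if_false, add_zero]
    field_simp
  rcases hx.1.eq_or_lt with h0 | h0
  · have h1 := h (q / 2) ⟨by linarith, by linarith⟩
    rw [val _ (by linarith), ← h0] at h1
    have h2 : q / 2 * C / q = C / 2 := by field_simp
    simp only [propU, and_self, if_true] at h1
    linarith
  · have h1 := h (x / 2) ⟨by linarith, by linarith [hx.2]⟩
    rw [val _ (by linarith), val _ h0] at h1
    have h2 : x / 2 * C / q = x * C / q / 2 := by ring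
    have h3 : 0 < x * C / q := by positivity
    linarith

/-- The first-order condition, obtained without calculus. Comparing `x` with the deviation `0`
gives `x + o ≤ q`, so the unconstrained maximizer `√(q * o) - o` is itself an admissible
deviation; comparing `x` with it forces equality. -/
lemma bestResponse_sq {C q x o : ℝ} (hC : 0 < C) (hq : 0 < q) (ho : 0 < o) (hx : 0 < x)
    (h : ∀ y ∈ Set.Icc (0 : ℝ) q, propU C C q y o ≤ propU C C q x o) :
    (x + o) ^ 2 = q * o := by
  have key : ∀ y ∈ Set.Icc (0 : ℝ) q, (y - x) * (q * o - (y + o) * (x + o)) ≤ 0 := by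
    intro y hy
    have h1 := h y hy
    have hyo : 0 < y + o := by linarith [hy.1]
    have hxo : 0 < x + o := by linarith
    simp only [propU, ho.ne', and_false, if_false] at h1
    have e : (y - x) * (q * o - (y + o) * (x + o)) =
        ((y * C / (y + o) - y * C / q) - (x * C / (x + o) - x * C / q)) *
          ((y + o) * (x + o) * q / C) := by
      field_simp
      ring
    rw [e]
    exact mul_nonpos_of_nonpos_of_nonneg (by linarith) (by positivity)
  have hsq : x + o ≤ q := by
    have h0 := key 0 ⟨le_rfl, hq.le⟩
    have : 0 < x * o := by positivity
    by_contra! hlt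
    nlinarith [mul_pos this (sub_pos.2 hlt)]
  have ht : Real.sqrt (q * o) ^ 2 = q * o := Real.sq_sqrt (by positivity)
  have htpos : 0 < Real.sqrt (q * o) := Real.sqrt_pos.2 (by positivity)
  set t := Real.sqrt (q * o)
  have hto : o ≤ t := by
    by_contra! hlt
    nlinarith
  have htq : t ≤ q := by
    by_contra! hlt
    nlinarith
  have h1 := key (t - o) ⟨by linarith, by linarith⟩
  have h2 : t * (t - (x + o)) ^ 2 ≤ 0 := by
    rw [← ht] at h1
    linarith
  have h3 : (t - (x + o)) ^ 2 = 0 :=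
    le_antisymm (nonpos_of_mul_nonpos_right h2 htpos) (sq_nonneg _)
  have h4 : t = x + o := sub_eq_zero.1 (pow_eq_zero_iff two_ne_zero |>.1 h3)
  rw [← h4, ht]

/-- with types `0 < q1 ≤ q2` and `B = C > 0`, every pure Nash
equilibrium `(x1, x2)` of the proportional mechanism satisfies `x1 > 0`,
`x2 > 0`, `x1·q2 = x2·q1` and `x1 + x2 = q1·q2/(q1+q2)`. -/
theorem prop_nash_equilibrium_characterization (q1 q2 B C x1 x2 : ℝ)
    (hq1 : 0 < q1) (hq12 : q1 ≤ q2) (hBC : B = C) (hC : 0 < C)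
    (hNE : IsPropNE B C q1 q2 x1 x2) :
    0 < x1 ∧ 0 < x2 ∧ x1 * q2 = x2 * q1 ∧ x1 + x2 = q1 * q2 / (q1 + q2) := by
  subst hBC
  obtain ⟨hx1, hx2, h1, h2⟩ := hNE
  have hq2 : 0 < q2 := hq1.trans_le hq12
  have p1 : 0 < x1 := by
    refine hx1.1.lt_of_ne fun h0 => ?_
    rw [← h0] at h2
    exact no_bestResponse_zero hC hq2 hx2 h2
  have p2 : 0 < x2 := by
    refine hx2.1.lt_of_ne fun h0 => ?_
    rw [← h0] at h1
    exact no_bestResponse_zero hC hq1 hx1 h1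
  have e1 := bestResponse_sq hC hq1 p2 p1 h1
  have e2 := bestResponse_sq hC hq2 p1 p2 h2
  refine ⟨p1, p2, by nlinarith, ?_⟩
  rw [eq_div_iff (by positivity)]
  have hS : x1 + x2 ≠ 0 := by positivity
  apply mul_left_cancel₀ hS
  linear_combination q2 * e1 + q1 * e2
end

section
/- Let B = C > 0. For every ε > 0 there exists a type profile (q_1, q_2) with 0 < q_1 ≤ q_2 such that for every pure Nash equilibrium (x_1^prop, x_2^prop) of the proportional mechanism and every optimal solution (x_1*, x_2*) of the associated linear program with n = 2, one has x_1^prop + x_2^prop ≤ ε·(x_1* + x_2*). -/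
/-- `(x1, x2)` is a feasible point of the linear program associated with the
two-agent gross-product maximization problem (specialization of the general
LP to `n = 2`). -/
def LPFeasible2 (q1 q2 B C x1 x2 : ℝ) : Prop :=
  0 ≤ x1 ∧ x1 ≤ q1 ∧ 0 ≤ x2 ∧ x2 ≤ q2 ∧ x1 ≤ x2 ∧
  C * (x2 / q2 + ((2 - 1) * (1 / q1 - 1 / q2) + 1 / q1) * x1) ≤ B

/-- `(x1, x2)` is an optimal solution of the two-agent linear program. -/
def LPOptimal2 (q1 q2 B C x1 x2 : ℝ) : Prop :=
  LPFeasible2 q1 q2 B C x1 x2 ∧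
  ∀ y1 y2 : ℝ, LPFeasible2 q1 q2 B C y1 y2 → y1 + y2 ≤ x1 + x2

/-- When `B = C`, the gross product of an equilibrium is bounded by the type of agent 1. -/
lemma sum_le_of_isPropNE {C q1 q2 x1 x2 : ℝ} (hC : 0 < C) (h1 : 0 < q1) (h2 : 0 < q2)
    (h : IsPropNE C C q1 q2 x1 x2) : x1 + x2 ≤ q1 := by
  obtain ⟨⟨hx1, -⟩, ⟨hx2, hx2'⟩, hd1, hd2⟩ := h
  rcases hx1.eq_or_lt with rfl | hpos1
  · rcases hx2.eq_or_lt with rfl | hpos2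
    · linarith
    · have hd := hd2 (x2 / 2) ⟨by linarith, by linarith⟩
      have hne : x2 / 2 ≠ 0 := by positivity
      have hsplit : x2 * C / q2 = x2 / 2 * C / q2 + x2 / 2 * C / q2 := by ring
      have hgain : 0 < x2 / 2 * C / q2 := by positivity
      simp only [propU, hpos2.ne', hne, false_and, if_false, add_zero,
        mul_div_cancel_left₀ C hne, mul_div_cancel_left₀ C hpos2.ne'] at hd
      linarith
  · have hd := hd1 0 ⟨le_rfl, h1.le⟩
    simp only [propU, hpos1.ne', false_and, if_false, zero_mul, zero_div, sub_zero,
      ite_self] at hd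
    have hle : x1 * C / q1 ≤ x1 * C / (x1 + x2) := by linarith
    exact (div_le_div_iff_of_pos_left (by positivity) h1 (by positivity)).1 hle

/-- with `B = C > 0`, for every `ε > 0` there is a type profile
`0 < q1 ≤ q2` such that the gross product of any pure Nash equilibrium of the
proportional mechanism is at most `ε` times the gross product of any optimal
solution of the associated linear program. -/
theorem proportional_mechanism_inefficiency (B C : ℝ) (hBC : B = C) (hC : 0 < C) :
    ∀ ε : ℝ, 0 < ε → ∃ q1 q2 : ℝ, 0 < q1 ∧ q1 ≤ q2 ∧
      ∀ x1p x2p : ℝ, IsPropNE B C q1 q2 x1p x2p →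
      ∀ x1s x2s : ℝ, LPOptimal2 q1 q2 B C x1s x2s →
        x1p + x2p ≤ ε * (x1s + x2s) := by
  subst hBC
  intro ε hε
  have hq2 : (1 : ℝ) ≤ 1 + 1 / ε := by
    have : 0 < 1 / ε := by positivity
    linarith
  have hq2pos : (0 : ℝ) < 1 + 1 / ε := by linarith
  refine ⟨1, 1 + 1 / ε, one_pos, hq2, fun x1 x2 hNE y1 y2 hopt => ?_⟩
  have hS := sum_le_of_isPropNE hC one_pos hq2pos hNE
  have hL := hopt.2 0 (1 + 1 / ε)
    ⟨le_rfl, zero_le_one, hq2pos.le, le_rfl, hq2pos.le, by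
      rw [div_self hq2pos.ne', mul_zero, add_zero, mul_one]⟩
  have hmul : ε * (1 + 1 / ε) ≤ ε * (y1 + y2) :=
    mul_le_mul_of_nonneg_left (by linarith) hε.le
  have hval : ε * (1 + 1 / ε) = ε + 1 := by field_simp
  linarith
end

section
/- For any feasible solution (f, x_1*, x_2*, …, x_n*) to the gross-product maximization problem, there exists a feasible solution (f, x_1', x_2', …, x_n') with the same reward function f such that x_1' ≤ x_2' ≤ … ≤ x_n' and Σ_{i=1}^n x_i' ≥ Σ_{i=1}^n x_i*. -/
/-!
If `q i < q j`, then every best response of `i` is at most every best response of `j`: were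
`x j < x i`, both qualities would be available to both agents, and the two best-response
inequalities would contradict each other because the marginal cost `C / q j` is strictly below
`C / q i` (`bestResponse_le`). So only agents of equal type can be out of order, and these have
the same best responses. Sorting the agents lexicographically by `(q, x)` therefore leaves the type
profile unchanged (the monotone rearrangement of `q` is unique) and makes the qualities monotone,
while all sums are preserved, as the qualities are only permuted.
-/

open Finset in
/-- `(f, x)` is a feasible solution of the `n`-agent gross-product
maximization problem with types `q 1, …, q n`, budget `B` and cost constant
`C` (agents are indexed by `1, …, n`): `f` is nonnegative on `[0, ∞)`, each
`x i ∈ [0, q i]` is a best response to the reward function `f`, and the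
budget constraint holds. -/
def FeasibleUGC (n : ℕ) (q : ℕ → ℝ) (B C : ℝ) (f : ℝ → ℝ) (x : ℕ → ℝ) : Prop :=
  (∀ y : ℝ, 0 ≤ y → 0 ≤ f y) ∧
  (∀ i ∈ Icc 1 n, x i ∈ Set.Icc 0 (q i)) ∧
  (∀ i ∈ Icc 1 n, ∀ y ∈ Set.Icc (0 : ℝ) (q i),
    f y - y * C / q i ≤ f (x i) - x i * C / q i) ∧
  (∑ i ∈ Icc 1 n, f (x i)) ≤ B

/-- Best responses are monotone across strictly different types. Here `a`, `b` are the types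
and `u`, `v` the corresponding best responses. -/
theorem bestResponse_le {f : ℝ → ℝ} {C a b u v : ℝ} (hC : 0 < C) (ha : 0 < a) (hab : a < b)
    (hu : u ∈ Set.Icc 0 a) (hv : v ∈ Set.Icc 0 b)
    (hbu : ∀ y ∈ Set.Icc (0 : ℝ) a, f y - y * C / a ≤ f u - u * C / a)
    (hbv : ∀ y ∈ Set.Icc (0 : ℝ) b, f y - y * C / b ≤ f v - v * C / b) : u ≤ v := by
  by_contra! h
  have h1 := hbu v ⟨hv.1, h.le.trans hu.2⟩
  have h2 := hbv u ⟨hu.1, hu.2.trans hab.le⟩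
  have h3 : C / b < C / a := div_lt_div_of_pos_left hC ha hab
  rw [mul_div_assoc, mul_div_assoc] at h1 h2
  nlinarith [mul_pos (sub_pos.2 h) (sub_pos.2 h3)]

theorem sum_Icc_one_eq_sum_fin (n : ℕ) (g : ℕ → ℝ) :
    ∑ i ∈ Finset.Icc 1 n, g i = ∑ k : Fin n, g (k + 1) := by
  rw [Fin.sum_univ_eq_sum_range (fun k => g (k + 1)), Finset.range_eq_Ico,
    Finset.sum_Ico_add' g 0 n 1]
  rfl

open Finset in
/-- for any feasible solution `(f, x*)` of the gross-product
maximization problem there is a feasible solution `(f, x')` with the same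
reward function such that `x' 1 ≤ x' 2 ≤ ⋯ ≤ x' n` and
`∑ x' i ≥ ∑ x* i`. -/
theorem exists_sorted_feasible (n : ℕ) (q : ℕ → ℝ) (B C : ℝ)
    (hq : ∀ i ∈ Icc 1 n, 0 < q i)
    (hqmono : ∀ i, 1 ≤ i → i < n → q i ≤ q (i + 1))
    (hB : 0 < B) (hC : 0 < C)
    (f : ℝ → ℝ) (x : ℕ → ℝ) (hx : FeasibleUGC n q B C f x) :
    ∃ x' : ℕ → ℝ, FeasibleUGC n q B C f x' ∧
      (∀ i, 1 ≤ i → i < n → x' i ≤ x' (i + 1)) ∧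
      (∑ i ∈ Icc 1 n, x i) ≤ ∑ i ∈ Icc 1 n, x' i := by
  obtain ⟨hf, hmem, hbr, hbud⟩ := hx
  have hI (k : Fin n) : (k : ℕ) + 1 ∈ Icc 1 n := mem_Icc.2 ⟨by omega, by omega⟩
  let Q : Fin n → ℝ := fun k => q (k + 1)
  let X : Fin n → ℝ := fun k => x (k + 1)
  have hQ : Monotone Q := by
    have key : ∀ b a : ℕ, a ≤ b → b < n → q (a + 1) ≤ q (b + 1) := by
      intro b a hab
      induction b, hab using Nat.le_induction with
      | base => exact fun _ => le_rfl
      | succ b _ ih =>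
        exact fun hb => (ih (by omega)).trans (hqmono (b + 1) (by omega) (by omega))
    exact fun a b hab => key b a hab b.2
  let L : Fin n → ℝ ×ₗ ℝ := fun k => toLex (Q k, X k)
  let σ := Tuple.sort L
  have hL : Monotone (L ∘ σ) := Tuple.monotone_sort L
  have hlex {a b : Fin n} (hab : a ≤ b) :
      Q (σ a) < Q (σ b) ∨ Q (σ a) = Q (σ b) ∧ X (σ a) ≤ X (σ b) :=
    Prod.Lex.le_iff.1 (hL hab)
  have hQσ : Monotone (Q ∘ σ) := fun a b hab => by
    rcases hlex hab with h | h
    · exact h.le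
    · exact h.1.le
  have hQeq (k : Fin n) : Q (σ k) = Q k :=
    congrFun (Tuple.unique_monotone (τ := Equiv.refl _) hQσ hQ) k
  have hXσ : Monotone (X ∘ σ) := fun a b hab => by
    rcases hlex hab with h | h
    · exact bestResponse_le hC (hq _ (hI _)) h (hmem _ (hI _)) (hmem _ (hI _))
        (hbr _ (hI _)) (hbr _ (hI _))
    · exact h.2
  let x' : ℕ → ℝ := fun i => if h : i - 1 < n then X (σ ⟨i - 1, h⟩) else 0
  have hx' (k : Fin n) : x' (k + 1) = X (σ k) := by simp [x']
  have hsum (g : ℝ → ℝ) : ∑ i ∈ Icc 1 n, g (x' i) = ∑ i ∈ Icc 1 n, g (x i) := by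
    rw [sum_Icc_one_eq_sum_fin, sum_Icc_one_eq_sum_fin]
    simp only [hx']
    exact Equiv.sum_comp σ (fun k => g (X k))
  have hidx {i : ℕ} (hi : i ∈ Icc 1 n) : ∃ k : Fin n, i = k + 1 := by
    rw [mem_Icc] at hi
    exact ⟨⟨i - 1, by omega⟩, by simp only; omega⟩
  refine ⟨x', ⟨hf, ?_, ?_, (hsum f).trans_le hbud⟩, ?_, (hsum id).ge⟩
  · intro i hi
    obtain ⟨k, rfl⟩ := hidx hi
    rw [hx', show q (k + 1) = Q (σ k) from (hQeq k).symm]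
    exact hmem _ (hI _)
  · intro i hi
    obtain ⟨k, rfl⟩ := hidx hi
    rw [hx', show q (k + 1) = Q (σ k) from (hQeq k).symm]
    exact hbr _ (hI _)
  · intro i h1 hin
    obtain ⟨k, rfl⟩ := hidx (mem_Icc.2 ⟨h1, hin.le⟩)
    have h2 := hx' ⟨k + 1, hin⟩
    simp only at h2
    rw [hx', h2]
    exact hXσ (Fin.mk_le_mk.2 (Nat.le_succ _) : k ≤ ⟨k + 1, hin⟩)
end

section
/- Let (f, x_1*, …, x_n*) satisfy: f : ℝ → ℝ with f(x) ≥ 0 for all x ≥ 0; x_i* ∈ [0, q_i] for each i; x_1* ≤ x_2* ≤ … ≤ x_n*; and for each i and every x ∈ [0, q_i], f(x_i*) − x_i*·C/q_i ≥ f(x) − x·C/q_i. Then for every i with 1 ≤ i ≤ n, f(x_i*) ≥ C·(x_i*/q_i + Σ_{j=1}^{i−1} (1/q_j − 1/q_{j+1})·x_j*). -/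
/-!
Write `B i` for the lower bound of agent `i`. The sum telescopes:
`B (i + 1) - B i = C * (x (i + 1) - x i) / q (i + 1)`. Since `x i ≤ q i ≤ q (i + 1)`, agent `i + 1`
may deviate to `x i`, and the best-response inequality says that `f (x (i + 1)) - f (x i)` is at
least this increment. Agent `1` may deviate to `0`, which gives
`f (x 1) ≥ f 0 + x 1 * C / q 1 ≥ B 1`. The claim follows by induction on the agent.
-/

open Finset in
/-- if `f` is nonnegative on `[0, ∞)`, each `x i ∈ [0, q i]` is
a best response to `f`, and `x 1 ≤ x 2 ≤ ⋯ ≤ x n`, then for every agent `i`,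
`f (x i) ≥ C·(x i / q i + ∑_{j=1}^{i−1} (1/q j − 1/q (j+1))·x j)`. -/
theorem reward_lower_bound (n : ℕ) (q : ℕ → ℝ) (C : ℝ)
    (hq : ∀ i ∈ Icc 1 n, 0 < q i)
    (hqmono : ∀ i, 1 ≤ i → i < n → q i ≤ q (i + 1))
    (hC : 0 < C) (f : ℝ → ℝ) (x : ℕ → ℝ)
    (hf : ∀ y : ℝ, 0 ≤ y → 0 ≤ f y)
    (hxq : ∀ i ∈ Icc 1 n, x i ∈ Set.Icc 0 (q i))
    (hxmono : ∀ i, 1 ≤ i → i < n → x i ≤ x (i + 1))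
    (hBR : ∀ i ∈ Icc 1 n, ∀ y ∈ Set.Icc (0 : ℝ) (q i),
      f y - y * C / q i ≤ f (x i) - x i * C / q i) :
    ∀ i ∈ Icc 1 n,
      C * (x i / q i + ∑ j ∈ Icc 1 (i - 1), (1 / q j - 1 / q (j + 1)) * x j)
        ≤ f (x i) := by
  intro i hi
  obtain ⟨h1, hin⟩ := Finset.mem_Icc.mp hi
  clear hi
  induction i, h1 using Nat.le_induction with
  | base =>
    have h := hBR 1 (Finset.mem_Icc.mpr ⟨le_rfl, hin⟩) 0
      ⟨le_rfl, (hq 1 (Finset.mem_Icc.mpr ⟨le_rfl, hin⟩)).le⟩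
    have h0 := hf 0 le_rfl
    have e : C * (x 1 / q 1) = x 1 * C / q 1 := by ring
    simp only [zero_mul, zero_div, sub_zero] at h
    simp only [Nat.sub_self, Finset.Icc_eq_empty_of_lt zero_lt_one, Finset.sum_empty, add_zero]
    linarith
  | succ k hk ih =>
    have hkn : k < n := hin
    have hxk := hxq k (Finset.mem_Icc.mpr ⟨hk, hkn.le⟩)
    have h := hBR (k + 1) (Finset.mem_Icc.mpr ⟨by lia, hin⟩) (x k)
      ⟨hxk.1, hxk.2.trans (hqmono k hk hkn)⟩
    have ih := ih hkn.le
    obtain ⟨m, rfl⟩ : ∃ m, k = m + 1 := ⟨k - 1, by lia⟩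
    rw [Nat.add_sub_cancel] at ih ⊢
    rw [Finset.sum_Icc_succ_top (by lia)]
    set S := ∑ j ∈ Finset.Icc 1 m, (1 / q j - 1 / q (j + 1)) * x j
    have e : C * (x (m + 1 + 1) / q (m + 1 + 1) +
        (S + (1 / q (m + 1) - 1 / q (m + 1 + 1)) * x (m + 1))) =
        C * (x (m + 1) / q (m + 1) + S) +
          (x (m + 1 + 1) * C / q (m + 1 + 1) - x (m + 1) * C / q (m + 1 + 1)) := by ring
    rw [e]
    linarith
end

section
/- Let x_1*, …, x_n* satisfy 0 ≤ x_i* ≤ q_i for each i, x_1* ≤ x_2* ≤ … ≤ x_n*, and C·(x_n*/q_n + Σ_{i=1}^{n−1} ((n−i)·(1/q_i − 1/q_{i+1}) + 1/q_i)·x_i*) ≤ B. Define the step function f : ℝ → ℝ by f(x) = 0 if x < x_1*, and otherwise f(x) = C·(x_m*/q_m + Σ_{j=1}^{m−1} (1/q_j − 1/q_{j+1})·x_j*) where m is the largest index i with x_i* ≤ x. Then (f, x_1*, …, x_n*) is a feasible solution to the gross-product maximization problem. -/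
open Finset in
/-- The payment for step `m`, divided by the cost constant. -/
noncomputable def stepPay (q x : ℕ → ℝ) (m : ℕ) : ℝ :=
  x m / q m + ∑ j ∈ Icc 1 (m - 1), (1 / q j - 1 / q (j + 1)) * x j

theorem stepPay_succ (q x : ℕ → ℝ) (m : ℕ) (hm : 1 ≤ m) :
    stepPay q x (m + 1) = stepPay q x m + (x (m + 1) - x m) * (1 / q (m + 1)) := by
  obtain ⟨k, rfl⟩ := Nat.exists_eq_add_of_le' hm
  simp only [stepPay, Nat.add_sub_cancel]
  rw [Finset.sum_Icc_succ_top (by omega)]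
  ring

open Finset in
/-- The total payment: the coefficient of `x i` collects the contributions of agents `i, …, n`. -/
theorem sum_stepPay (q x : ℕ → ℝ) (n : ℕ) (hn : 1 ≤ n) :
    ∑ i ∈ Icc 1 n, stepPay q x i = x n / q n +
      ∑ i ∈ Icc 1 (n - 1), (((n : ℝ) - i) * (1 / q i - 1 / q (i + 1)) + 1 / q i) * x i := by
  induction n, hn using Nat.le_induction with
  | base => simp [stepPay]
  | succ n hn ih =>
    obtain ⟨k, rfl⟩ := Nat.exists_eq_add_of_le' hn
    rw [Finset.sum_Icc_succ_top (by omega), ih]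
    simp only [stepPay, Nat.add_sub_cancel]
    rw [Finset.sum_Icc_succ_top (b := k) (by omega), Finset.sum_Icc_succ_top (b := k) (by omega)]
    -- Raising `n` by one adds one more copy of each increment `(1 / q i - 1 / q (i + 1)) * x i`.
    have key : ∑ i ∈ Icc 1 k,
          ((((k + 1 + 1 : ℕ) : ℝ) - i) * (1 / q i - 1 / q (i + 1)) + 1 / q i) * x i
        = ∑ i ∈ Icc 1 k, ((((k + 1 : ℕ) : ℝ) - i) * (1 / q i - 1 / q (i + 1)) + 1 / q i) * x i
          + ∑ i ∈ Icc 1 k, (1 / q i - 1 / q (i + 1)) * x i := by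
      rw [← Finset.sum_add_distrib]
      refine Finset.sum_congr rfl fun i _ => ?_
      push_cast
      ring
    rw [key]
    push_cast
    ring

theorem one_div_anti (n : ℕ) (q : ℕ → ℝ) (hq : ∀ i ∈ Finset.Icc 1 n, 0 < q i)
    (hqmono : ∀ i, 1 ≤ i → i < n → q i ≤ q (i + 1)) (i j : ℕ) (hi : 1 ≤ i) (hij : i ≤ j)
    (hj : j ≤ n) : 1 / q j ≤ 1 / q i := by
  induction j, hij using Nat.le_induction with
  | base => exact le_rfl
  | succ j hij ih =>
    exact (one_div_le_one_div_of_le (hq j (Finset.mem_Icc.2 ⟨by omega, by omega⟩))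
      (hqmono j (by omega) (by omega))).trans (ih (by omega))

/-- Among all steps, agent `i` weakly prefers step `i`. -/
theorem stepPay_peak (n : ℕ) (q x : ℕ → ℝ) (hq : ∀ i ∈ Finset.Icc 1 n, 0 < q i)
    (hqmono : ∀ i, 1 ≤ i → i < n → q i ≤ q (i + 1))
    (hxmono : ∀ i, 1 ≤ i → i < n → x i ≤ x (i + 1)) (i m : ℕ) (hi : 1 ≤ i) (hin : i ≤ n)
    (hm : 1 ≤ m) (hmn : m ≤ n) :
    stepPay q x m - x m * (1 / q i) ≤ stepPay q x i - x i * (1 / q i) := by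
  rcases le_total i m with h | h
  · induction m, h using Nat.le_induction with
    | base => exact le_rfl
    | succ m h ih =>
      have h1 := ih (by omega) (by omega)
      have h2 := one_div_anti n q hq hqmono i (m + 1) hi (by omega) hmn
      have h3 := hxmono m (by omega) (by omega)
      rw [stepPay_succ q x m (by omega)]
      nlinarith [mul_le_mul_of_nonneg_left h2 (sub_nonneg.2 h3)]
  · induction h using Nat.decreasingInduction with
    | self => exact le_rfl
    | of_succ m h ih =>
      have h1 := ih (by omega) (by omega)
      have h2 := one_div_anti n q hq hqmono (m + 1) i (by omega) (by omega) hin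
      have h3 := hxmono m (by omega) (by omega)
      rw [stepPay_succ q x m (by omega)] at h1
      nlinarith [mul_le_mul_of_nonneg_left h2 (sub_nonneg.2 h3)]

/-- The payment for step `m` covers agent `m`'s cost. -/
theorem le_stepPay (n : ℕ) (q x : ℕ → ℝ) (hq : ∀ i ∈ Finset.Icc 1 n, 0 < q i)
    (hqmono : ∀ i, 1 ≤ i → i < n → q i ≤ q (i + 1))
    (hx : ∀ i ∈ Finset.Icc 1 n, 0 ≤ x i) (m : ℕ) (hmn : m ≤ n) :
    x m * (1 / q m) ≤ stepPay q x m := by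
  rw [stepPay, mul_one_div, le_add_iff_nonneg_right]
  refine Finset.sum_nonneg fun j hj => ?_
  rw [Finset.mem_Icc] at hj
  exact mul_nonneg (sub_nonneg.2 (one_div_anti n q hq hqmono j (j + 1) hj.1 (by omega) (by omega)))
    (hx j (Finset.mem_Icc.2 ⟨hj.1, by omega⟩))

open Finset in
/-- To the right of `x 1`, the maximum of the indices `i` with `x i ≤ y` is attained. -/
theorem exists_step (n : ℕ) (hn : 1 ≤ n) (x : ℕ → ℝ) (y : ℝ) (hy : x 1 ≤ y) :
    ∃ m, ((Icc 1 n).filter (fun i => x i ≤ y)).sup id = m ∧ 1 ≤ m ∧ m ≤ n ∧ x m ≤ y ∧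
      ∀ k, 1 ≤ k → k ≤ n → x k ≤ y → k ≤ m := by
  have hne : ((Icc 1 n).filter (fun i => x i ≤ y)).Nonempty := ⟨1, by simp [hn, hy]⟩
  obtain ⟨m, hm, he⟩ := Finset.exists_mem_eq_sup _ hne id
  have hm' := hm
  simp only [mem_filter, mem_Icc] at hm'
  refine ⟨m, he, hm'.1.1, hm'.1.2, hm'.2, fun k h1 h2 h3 => ?_⟩
  have := Finset.le_sup (f := id) (show k ∈ (Icc 1 n).filter (fun i => x i ≤ y) by
    simp [h1, h2, h3])
  rw [he] at this
  exact this


open Finset in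
/-- sufficiency direction of Lemma 2: if `0 ≤ x i ≤ q i` for
each `i`, `x 1 ≤ ⋯ ≤ x n`, and the budget inequality
`C·(x n/q n + ∑_{i=1}^{n−1} ((n−i)(1/q i − 1/q (i+1)) + 1/q i)·x i) ≤ B`
holds, then the step reward function `f`, which pays `0` below `x 1` and
otherwise pays `C·(x m/q m + ∑_{j=1}^{m−1} (1/q j − 1/q (j+1))·x j)` where
`m` is the largest index `i` with `x i ≤ y`, makes `(f, x)` a feasible
solution of the gross-product maximization problem. -/
theorem step_reward_feasible (n : ℕ) (hn : 1 ≤ n) (q : ℕ → ℝ) (B C : ℝ)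
    (hq : ∀ i ∈ Icc 1 n, 0 < q i)
    (hqmono : ∀ i, 1 ≤ i → i < n → q i ≤ q (i + 1))
    (hB : 0 < B) (hC : 0 < C) (x : ℕ → ℝ)
    (hxq : ∀ i ∈ Icc 1 n, x i ∈ Set.Icc 0 (q i))
    (hxmono : ∀ i, 1 ≤ i → i < n → x i ≤ x (i + 1))
    (hbudget : C * (x n / q n +
        ∑ i ∈ Icc 1 (n - 1),
          (((n : ℝ) - i) * (1 / q i - 1 / q (i + 1)) + 1 / q i) * x i) ≤ B)
    (f : ℝ → ℝ)
    (hf : ∀ y : ℝ, f y =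
      if y < x 1 then 0
      else
        let m := ((Icc 1 n).filter (fun i => x i ≤ y)).sup id
        C * (x m / q m + ∑ j ∈ Icc 1 (m - 1), (1 / q j - 1 / q (j + 1)) * x j)) :
    FeasibleUGC n q B C f x := by
  have hx0 : ∀ i ∈ Finset.Icc 1 n, 0 ≤ x i := fun i hi => (hxq i hi).1
  have hpeak := stepPay_peak n q x hq hqmono hxmono
  have hle := le_stepPay n q x hq hqmono hx0
  have hpos : ∀ m, 1 ≤ m → m ≤ n → 0 ≤ stepPay q x m := fun m h1 h2 =>
    (mul_nonneg (hx0 m (Finset.mem_Icc.2 ⟨h1, h2⟩))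
      (one_div_pos.2 (hq m (Finset.mem_Icc.2 ⟨h1, h2⟩))).le).trans (hle m h2)
  have hstep : ∀ y, x 1 ≤ y → ∃ m, f y = C * stepPay q x m ∧ 1 ≤ m ∧ m ≤ n ∧ x m ≤ y ∧
      ∀ k, 1 ≤ k → k ≤ n → x k ≤ y → k ≤ m := by
    intro y hy
    obtain ⟨m, he, h⟩ := exists_step n hn x y hy
    refine ⟨m, ?_, h⟩
    rw [hf, if_neg (not_lt.2 hy), he]
    rfl
  have hmono : ∀ i j, 1 ≤ i → i ≤ j → j ≤ n → x i ≤ x j := by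
    intro i j hi hij
    induction j, hij using Nat.le_induction with
    | base => exact fun _ => le_rfl
    | succ j hij ih => exact fun hj => (ih (by omega)).trans (hxmono j (by omega) (by omega))
  have hfx : ∀ i, 1 ≤ i → i ≤ n → f (x i) = C * stepPay q x i := by
    intro i hi hin
    obtain ⟨m, he, h1, h2, h3, h4⟩ := hstep (x i) (hmono 1 i le_rfl hi hin)
    -- The largest index `m` with `x m ≤ x i` is at least `i`, hence `x m = x i`.
    have hxe : x m = x i := le_antisymm h3 (hmono i m hi (h4 i hi hin le_rfl) h2)
    have a := hpeak i m hi hin h1 h2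
    have b := hpeak m i h1 h2 hi hin
    rw [hxe] at a b
    rw [he, show stepPay q x m = stepPay q x i by linarith]
  refine ⟨fun y _ => ?_, hxq, fun i hi y hy => ?_, ?_⟩
  · rcases lt_or_ge y (x 1) with h | h
    · rw [hf, if_pos h]
    · obtain ⟨m, he, h1, h2, -⟩ := hstep y h
      rw [he]
      exact mul_nonneg hC.le (hpos m h1 h2)
  · have hqi := one_div_pos.2 (hq i hi)
    obtain ⟨hi1, hin⟩ := Finset.mem_Icc.1 hi
    -- Divide by `C`: it suffices to compare payments net of effort cost `1 / q i` per unit.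
    suffices h : ∃ t, f y = C * t ∧ t - y * (1 / q i) ≤ stepPay q x i - x i * (1 / q i) by
      obtain ⟨t, ht, h⟩ := h
      rw [ht, hfx i hi1 hin]
      have := mul_le_mul_of_nonneg_left h hC.le
      calc C * t - y * C / q i = C * (t - y * (1 / q i)) := by ring
        _ ≤ C * (stepPay q x i - x i * (1 / q i)) := this
        _ = _ := by ring
    rcases lt_or_ge y (x 1) with h | h
    · refine ⟨0, by rw [hf, if_pos h, mul_zero], ?_⟩
      have := mul_nonneg hy.1 hqi.le
      linarith [hle i hin]
    · obtain ⟨m, he, h1, h2, h3, -⟩ := hstep y h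
      refine ⟨_, he, ?_⟩
      linarith [hpeak i m hi1 hin h1 h2, mul_le_mul_of_nonneg_right h3 hqi.le]
  · rw [Finset.sum_congr rfl fun i hi =>
      hfx i (Finset.mem_Icc.1 hi).1 (Finset.mem_Icc.1 hi).2, ← Finset.mul_sum,
      sum_stepPay q x n hn]
    exact hbudget
end

section
/- The supremum of Σ_{i=1}^n x_i* over all feasible solutions (f, x_1*, …, x_n*) to the gross-product maximization problem equals the supremum of Σ_{i=1}^n x_i* over all feasible points of the associated linear program. -/
open Finset in
/-- `x` is a feasible point of the linear program associated with the
`n`-agent gross-product maximization problem. -/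
def LPFeasible (n : ℕ) (q : ℕ → ℝ) (B C : ℝ) (x : ℕ → ℝ) : Prop :=
  (∀ i ∈ Icc 1 n, 0 ≤ x i ∧ x i ≤ q i) ∧
  (∀ i, 1 ≤ i → i < n → x i ≤ x (i + 1)) ∧
  C * (x n / q n +
      ∑ i ∈ Icc 1 (n - 1),
        (((n : ℝ) - i) * (1 / q i - 1 / q (i + 1)) + 1 / q i) * x i) ≤ B

open Finset

/-- The least reward that incentive compatibility forces on the quality `x j`, for
monotone `x` with `x 0 = 0`. -/
noncomputable def payment (q : ℕ → ℝ) (C : ℝ) (x : ℕ → ℝ) (j : ℕ) : ℝ :=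
  ∑ k ∈ range j, C / q (k + 1) * (x (k + 1) - x k)

/-- The piecewise linear function with value `0` at `0`, slope `C / q k` on `[x (k-1), x k]` for
`1 ≤ k ≤ n`, and slope `0` beyond `x n`, for monotone `x` with `x 0 = 0`. -/
noncomputable def reward (n : ℕ) (q : ℕ → ℝ) (C : ℝ) (x : ℕ → ℝ) (y : ℝ) : ℝ :=
  ∑ k ∈ range n, C / q (k + 1) * (min y (x (k + 1)) - min y (x k))

lemma sum_Icc_eq_sum_range (n : ℕ) (g : ℕ → ℝ) :
    ∑ i ∈ Icc 1 n, g i = ∑ i ∈ range n, g (i + 1) := by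
  induction n with
  | zero => simp
  | succ n ih => rw [sum_Icc_succ_top (by omega), ih, sum_range_succ]

/-- Summation by parts for a single payment. -/
lemma payment_succ_eq (q : ℕ → ℝ) (C : ℝ) (x : ℕ → ℝ) (hx : x 0 = 0) (m : ℕ) :
    payment q C x (m + 1) = C * (x (m + 1) / q (m + 1) +
      ∑ i ∈ range m, (1 / q (i + 1) - 1 / q (i + 2)) * x (i + 1)) := by
  induction m with
  | zero => simp [payment, hx]; ring
  | succ m ih =>
    rw [payment, sum_range_succ, ← payment, ih, sum_range_succ]
    ring

/-- The total of the payments is the left-hand side of the budget constraint of the linear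
program. -/
lemma sum_payment (n : ℕ) (hn : 1 ≤ n) (q : ℕ → ℝ) (C : ℝ) (x : ℕ → ℝ) (hx : x 0 = 0) :
    ∑ j ∈ Icc 1 n, payment q C x j = C * (x n / q n +
      ∑ i ∈ Icc 1 (n - 1),
        (((n : ℝ) - i) * (1 / q i - 1 / q (i + 1)) + 1 / q i) * x i) := by
  obtain ⟨m, rfl⟩ : ∃ m, n = m + 1 := ⟨n - 1, by omega⟩
  simp only [sum_Icc_eq_sum_range, Nat.add_sub_cancel]
  clear hn
  induction m with
  | zero => simp [payment, hx]; ring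
  | succ m ih =>
    have h : ∑ i ∈ range m, (((m + 1 + 1 : ℕ) : ℝ) - ((i + 1 : ℕ) : ℝ)) *
          (1 / q (i + 1) - 1 / q (i + 1 + 1)) * x (i + 1) +
        ∑ i ∈ range m, 1 / q (i + 1) * x (i + 1) =
        ∑ i ∈ range m, ((((m + 1 : ℕ) : ℝ) - ((i + 1 : ℕ) : ℝ)) *
          (1 / q (i + 1) - 1 / q (i + 1 + 1)) + 1 / q (i + 1)) * x (i + 1) +
        ∑ i ∈ range m, (1 / q (i + 1) - 1 / q (i + 2)) * x (i + 1) := by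
      rw [← sum_add_distrib, ← sum_add_distrib]
      refine sum_congr rfl fun i _ => ?_
      push_cast
      ring
    rw [sum_range_succ, ih, payment_succ_eq q C x hx, sum_range_succ _ m, sum_range_succ _ m]
    simp only [add_mul _ _ (x _), sum_add_distrib] at h ⊢
    push_cast at h ⊢
    linear_combination (-C) * h

lemma le_of_step {n a : ℕ} {g : ℕ → ℝ} (h : ∀ i, a ≤ i → i < n → g i ≤ g (i + 1)) {i j : ℕ}
    (hi : a ≤ i) (hij : i ≤ j) (hj : j ≤ n) : g i ≤ g j := by
  induction j, hij using Nat.le_induction with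
  | base => exact le_rfl
  | succ j hij ih => exact (ih (by omega)).trans (h j (by omega) (by omega))

lemma reward_nonneg {n : ℕ} {q x : ℕ → ℝ} {C : ℝ} (hC : 0 < C)
    (hq : ∀ i ∈ Icc 1 n, 0 < q i) (hmono : ∀ i, 0 ≤ i → i < n → x i ≤ x (i + 1)) (y : ℝ) :
    0 ≤ reward n q C x y := by
  refine sum_nonneg fun k hk => ?_
  have hk' := mem_range.1 hk
  have h1 := hq (k + 1) (by simp; omega)
  have h2 : min y (x k) ≤ min y (x (k + 1)) := min_le_min le_rfl (hmono k (by omega) hk')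
  exact mul_nonneg (div_pos hC h1).le (by linarith)

lemma reward_eq_payment {n : ℕ} {q x : ℕ → ℝ} {C : ℝ}
    (hmono : ∀ i, 0 ≤ i → i < n → x i ≤ x (i + 1)) {i : ℕ} (hi : i ≤ n) :
    reward n q C x (x i) = payment q C x i := by
  rw [reward, payment, eq_comm]
  refine sum_subset_zero_on_sdiff (range_mono hi) ?_ ?_
  · intro k hk
    rw [mem_sdiff, mem_range, mem_range] at hk
    have h1 := le_of_step hmono (Nat.zero_le i) (show i ≤ k by omega) (by omega)
    have h2 := le_of_step hmono (Nat.zero_le i) (show i ≤ k + 1 by omega) (by omega)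
    rw [min_eq_left h1, min_eq_left h2]
    simp
  · intro k hk
    have hk' := mem_range.1 hk
    have h1 := le_of_step hmono (Nat.zero_le k) (show k ≤ i by omega) (by omega)
    have h2 := le_of_step hmono (Nat.zero_le (k + 1)) (show k + 1 ≤ i by omega) (by omega)
    rw [min_eq_right h1, min_eq_right h2]

/-- Each linear piece of `reward` contributes at most `C / q i` times its own displacement: pieces
`k ≤ i` have slope at least `C / q i` and are exhausted at `x i`, pieces `k > i` have slope at most
`C / q i` and are untouched at `x i`. -/
lemma reward_bestResponse {n : ℕ} {q x : ℕ → ℝ} {C : ℝ} (hC : 0 < C)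
    (hq : ∀ i ∈ Icc 1 n, 0 < q i) (hqmono : ∀ i, 1 ≤ i → i < n → q i ≤ q (i + 1))
    (hx : x 0 = 0) (hmono : ∀ i, 0 ≤ i → i < n → x i ≤ x (i + 1))
    {i : ℕ} (hi1 : 1 ≤ i) (hin : i ≤ n) {y : ℝ} (hy : 0 ≤ y) :
    reward n q C x y - y * C / q i ≤ reward n q C x (x i) - x i * C / q i := by
  have hqi : 0 < q i := hq i (mem_Icc.2 ⟨hi1, hin⟩)
  have key : reward n q C x y - reward n q C x (x i) ≤
      ∑ k ∈ range n, C / q i * ((min y (x (k + 1)) - min y (x k)) -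
        (min (x i) (x (k + 1)) - min (x i) (x k))) := by
    rw [reward, reward, ← sum_sub_distrib]
    refine sum_le_sum fun k hk => ?_
    have hk' := mem_range.1 hk
    have hqk := hq (k + 1) (by simp; omega)
    have hs := hmono k (by omega) hk'
    rw [← mul_sub]
    rcases Nat.lt_or_ge k i with hki | hki
    · have h1 := le_of_step hmono (Nat.zero_le k) (show k ≤ i by omega) (by omega)
      have h2 := le_of_step hmono (Nat.zero_le (k + 1)) (show k + 1 ≤ i by omega) (by omega)
      have hd : C / q i ≤ C / q (k + 1) :=
        div_le_div_of_nonneg_left hC.le hqk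
          (le_of_step hqmono (by omega) (show k + 1 ≤ i by omega) hin)
      refine mul_le_mul_of_nonpos_right hd ?_
      rw [min_eq_right h1, min_eq_right h2]
      rcases le_total y (x k) with h | h <;> rcases le_total y (x (k + 1)) with h' | h' <;>
        simp [h, h'] <;> linarith
    · have h1 := le_of_step hmono (Nat.zero_le i) (show i ≤ k by omega) (by omega)
      have h2 := le_of_step hmono (Nat.zero_le i) (show i ≤ k + 1 by omega) (by omega)
      have hd : C / q (k + 1) ≤ C / q i :=
        div_le_div_of_nonneg_left hC.le hqi
          (le_of_step hqmono hi1 (show i ≤ k + 1 by omega) (by omega))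
      refine mul_le_mul_of_nonneg_right hd ?_
      rw [min_eq_left h1, min_eq_left h2]
      have : min y (x k) ≤ min y (x (k + 1)) := min_le_min le_rfl hs
      linarith
  have hxi : 0 ≤ x i := by
    have := le_of_step hmono le_rfl (Nat.zero_le i) hin
    rwa [hx] at this
  have hxn : x i ≤ x n := le_of_step hmono (Nat.zero_le i) hin le_rfl
  rw [← mul_sum, sum_sub_distrib, sum_range_sub (fun k => min y (x k)),
    sum_range_sub (fun k => min (x i) (x k)), hx, min_eq_right hy, min_eq_right hxi,
    min_eq_left hxn] at key
  have h3 : C / q i * (min y (x n) - 0 - (x i - 0)) ≤ C / q i * (y - x i) :=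
    mul_le_mul_of_nonneg_left (by linarith [min_le_left y (x n)]) (div_pos hC hqi).le
  have h4 : C / q i * (y - x i) = y * C / q i - x i * C / q i := by ring
  linarith

/-- Best responses are monotone in the type. -/
lemma FeasibleUGC.le_of_lt {n : ℕ} {q : ℕ → ℝ} {B C : ℝ} {f : ℝ → ℝ} {x : ℕ → ℝ}
    (hC : 0 < C) (hq : ∀ i ∈ Icc 1 n, 0 < q i) (h : FeasibleUGC n q B C f x) {i j : ℕ}
    (hi : i ∈ Icc 1 n) (hj : j ∈ Icc 1 n) (hij : q i < q j) : x i ≤ x j := by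
  obtain ⟨-, hx, hbr, -⟩ := h
  by_contra! hlt
  have hi' := hx i hi
  have hj' := hx j hj
  have h1 := hbr i hi (x j) ⟨hj'.1, hlt.le.trans hi'.2⟩
  have h2 := hbr j hj (x i) ⟨hi'.1, hi'.2.trans hij.le⟩
  have h3 : C / q j < C / q i := div_lt_div_of_pos_left hC (hq i hi) hij
  have h4 : 0 < (x i - x j) * (C / q i - C / q j) := mul_pos (by linarith) (by linarith)
  simp only [mul_div_assoc] at h1 h2
  nlinarith

/-- Agents can be relabelled, preserving types, so that the qualities increase with the index:
sort them lexicographically by type and quality. -/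
lemma FeasibleUGC.exists_monotone {n : ℕ} {q : ℕ → ℝ} {B C : ℝ} {f : ℝ → ℝ} {x : ℕ → ℝ}
    (hC : 0 < C) (hq : ∀ i ∈ Icc 1 n, 0 < q i)
    (hqmono : ∀ i, 1 ≤ i → i < n → q i ≤ q (i + 1)) (h : FeasibleUGC n q B C f x) :
    ∃ z : ℕ → ℝ, FeasibleUGC n q B C f z ∧ z 0 = 0 ∧
      (∀ i, 0 ≤ i → i < n → z i ≤ z (i + 1)) ∧ ∑ i ∈ Icc 1 n, z i = ∑ i ∈ Icc 1 n, x i := by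
  let σ : Equiv.Perm (Fin n) :=
    Tuple.sort fun i : Fin n => toLex (q (i + 1), x (i + 1))
  have hσ : Monotone fun i : Fin n => toLex (q (σ i + 1), x (σ i + 1)) :=
    Tuple.monotone_sort fun i : Fin n => toLex (q (i + 1), x (i + 1))
  have hqσ : ∀ i : Fin n, q (σ i + 1) = q (i + 1) := by
    have h1 : Monotone ((fun i : Fin n => q (i + 1)) ∘ σ) := fun i j hij =>
      Prod.Lex.monotone_fst _ _ (hσ hij)
    have h2 : Monotone ((fun i : Fin n => q (i + 1)) ∘ Equiv.refl _) := fun i j hij =>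
      le_of_step hqmono (by omega) (Nat.add_le_add_right hij 1) (by omega)
    exact congrFun (Tuple.unique_monotone h1 h2)
  let z : ℕ → ℝ := fun i => if hi : 1 ≤ i ∧ i ≤ n then x (σ ⟨i - 1, by omega⟩ + 1) else 0
  have hz : ∀ i : Fin n, z (i + 1) = x (σ i + 1) := fun i => by
    have : 1 ≤ (i : ℕ) + 1 ∧ (i : ℕ) + 1 ≤ n := by omega
    simp [z, this]
  have hmem : ∀ i : Fin n, (i : ℕ) + 1 ∈ Icc 1 n := fun i => by
    rw [mem_Icc]; omega
  have hfin : ∀ i ∈ Icc 1 n, ∃ k : Fin n, i = k + 1 := fun i hi => by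
    rw [mem_Icc] at hi
    exact ⟨⟨i - 1, by omega⟩, by exact (Nat.sub_add_cancel hi.1).symm⟩
  have hsum : ∀ g : ℝ → ℝ, ∑ i ∈ Icc 1 n, g (z i) = ∑ i ∈ Icc 1 n, g (x i) := fun g => by
    rw [sum_Icc_eq_sum_range, sum_Icc_eq_sum_range, sum_range, sum_range]
    simp only [hz]
    exact Equiv.sum_comp σ fun i : Fin n => g (x (i + 1))
  have hle := fun {i j} => FeasibleUGC.le_of_lt (i := i) (j := j) hC hq h
  obtain ⟨hf, hx, hbr, hB⟩ := h
  have hxz : ∀ i ∈ Icc 1 n, z i ∈ Set.Icc 0 (q i) := fun i hi => by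
    obtain ⟨k, rfl⟩ := hfin i hi
    rw [hz, ← hqσ]
    exact hx _ (hmem _)
  refine ⟨z, ⟨hf, hxz, ?_, (hsum f).trans_le hB⟩, by simp [z], ?_, hsum id⟩
  · intro i hi
    obtain ⟨k, rfl⟩ := hfin i hi
    rw [hz, ← hqσ]
    exact hbr _ (hmem _)
  · intro i _ hi
    rcases Nat.eq_zero_or_pos i with rfl | hpos
    · have := (hxz 1 (by simp; omega)).1
      simpa [z] using this
    · have e1 := hz ⟨i - 1, by omega⟩
      have e2 := hz ⟨i, hi⟩
      have h1 := hσ (show (⟨i - 1, by omega⟩ : Fin n) ≤ ⟨i, hi⟩ by simp)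
      simp only [Nat.sub_add_cancel hpos] at e1
      rw [e1, e2]
      rcases Prod.Lex.toLex_le_toLex.1 h1 with h2 | h2
      · exact hle (hmem _) (hmem _) h2
      · exact h2.2

/-- Compare `x (j + 1)` with the deviation of agent `j + 1` to `x j`, which lies in `[0, q (j + 1)]`
by monotonicity; for `j = 0` this is the deviation to quality `0`. -/
lemma FeasibleUGC.payment_le {n : ℕ} {q : ℕ → ℝ} {B C : ℝ} {f : ℝ → ℝ} {x : ℕ → ℝ}
    (h : FeasibleUGC n q B C f x) (hx0 : x 0 = 0)
    (hmono : ∀ i, 0 ≤ i → i < n → x i ≤ x (i + 1)) {j : ℕ} (hj : j ≤ n) :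
    payment q C x j ≤ f (x j) := by
  obtain ⟨hf, hx, hbr, -⟩ := h
  induction j with
  | zero => simpa [payment, hx0] using hf 0 le_rfl
  | succ j ih =>
    have hmem : j + 1 ∈ Icc 1 n := by simp; omega
    have h0 : 0 ≤ x j := by
      have := le_of_step hmono le_rfl (Nat.zero_le j) (by omega)
      rwa [hx0] at this
    have h1 := hbr (j + 1) hmem (x j) ⟨h0, (hmono j (by omega) hj).trans (hx _ hmem).2⟩
    have h2 := ih (by omega)
    rw [payment, sum_range_succ, ← payment]
    have h3 : C / q (j + 1) * (x (j + 1) - x j) =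
      x (j + 1) * C / q (j + 1) - x j * C / q (j + 1) := by ring
    linarith

open Finset in
/-- the gross-product maximization problem and its associated
linear program have the same optimal value: the supremum of `∑ x i` over all
feasible solutions `(f, x)` of the former equals the supremum of `∑ x i` over
all feasible points `x` of the latter. -/
theorem ugc_lp_same_value (n : ℕ) (hn : 1 ≤ n) (q : ℕ → ℝ) (B C : ℝ)
    (hq : ∀ i ∈ Icc 1 n, 0 < q i)
    (hqmono : ∀ i, 1 ≤ i → i < n → q i ≤ q (i + 1))
    (hB : 0 < B) (hC : 0 < C) :
    sSup {s : ℝ | ∃ (f : ℝ → ℝ) (x : ℕ → ℝ),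
        FeasibleUGC n q B C f x ∧ s = ∑ i ∈ Icc 1 n, x i} =
    sSup {s : ℝ | ∃ x : ℕ → ℝ,
        LPFeasible n q B C x ∧ s = ∑ i ∈ Icc 1 n, x i} := by
  congr 1
  ext s
  constructor
  · rintro ⟨f, x, hx, rfl⟩
    obtain ⟨z, hz, hz0, hmono, hsum⟩ := hx.exists_monotone hC hq hqmono
    refine ⟨z, ⟨hz.2.1, fun i _ => hmono i (Nat.zero_le i), ?_⟩, hsum.symm⟩
    rw [← sum_payment n hn q C z hz0]
    exact (sum_le_sum fun j hj => hz.payment_le hz0 hmono (mem_Icc.1 hj).2).trans hz.2.2.2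
  · rintro ⟨x, ⟨hx, hmono, hbudget⟩, rfl⟩
    -- The program does not constrain `x 0`, while the payments need `x 0 = 0`.
    let z : ℕ → ℝ := fun i => if i = 0 then 0 else x i
    have hzx : ∀ i, 1 ≤ i → z i = x i := fun i hi => if_neg (by omega)
    have hz0 : z 0 = 0 := if_pos rfl
    have hzmono : ∀ i, 0 ≤ i → i < n → z i ≤ z (i + 1) := fun i _ hi => by
      rw [hzx (i + 1) (by omega)]
      rcases Nat.eq_zero_or_pos i with rfl | hpos
      · rw [hz0]
        exact (hx _ (by simp; omega)).1
      · rw [hzx i hpos]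
        exact hmono i hpos hi
    have hzsum : ∑ i ∈ Icc 1 n, z i = ∑ i ∈ Icc 1 n, x i :=
      sum_congr rfl fun i hi => hzx i (mem_Icc.1 hi).1
    refine ⟨reward n q C z, z, ⟨fun y _ => reward_nonneg hC hq hzmono y, ?_, ?_, ?_⟩, hzsum.symm⟩
    · intro i hi
      rw [hzx i (mem_Icc.1 hi).1]
      exact hx i hi
    · intro i hi y hy
      exact reward_bestResponse hC hq hqmono hz0 hzmono (mem_Icc.1 hi).1 (mem_Icc.1 hi).2 hy.1
    · rw [sum_congr rfl fun i hi => reward_eq_payment hzmono (mem_Icc.1 hi).2,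
        sum_payment n hn q C z hz0, hzx n hn]
      refine le_of_eq_of_le ?_ hbudget
      congr 2
      exact sum_congr rfl fun i hi => by rw [hzx i (mem_Icc.1 hi).1]
end

section
/- Let z_1, …, z_n > 0 and K > 0. The maximum of Σ_{i=1}^n x_i over all x with 0 ≤ x_1 ≤ x_2 ≤ … ≤ x_n and Σ_{i=1}^n z_i·x_i ≤ K equals max_{1 ≤ i ≤ n} K·(n − i + 1)/(z_i + z_{i+1} + … + z_n), and for an index i attaining this maximum it is achieved by setting x_j = 0 for j < i and x_j = K/(z_i + z_{i+1} + … + z_n) for j ≥ i. -/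
/-!
Abel summation. For a nonnegative nondecreasing `x`, a weighted sum `∑ w j * x j` is a nonnegative
combination of the tail sums of `w`, hence nonnegative once all of these are
(`weighted_sum_nonneg`). Let `M` be the claimed maximum. Taking `w j = M * z j - K`, the tail
condition says exactly that `M ≥ K (n - i + 1) / (z i + ⋯ + z n)` for every `i`, and the
conclusion is `K * ∑ x j ≤ M * ∑ z j * x j ≤ M * K`. Conversely, the step vectors of the
statement are feasible and have total `K (n - i + 1) / (z i + ⋯ + z n)`.
-/

open Finset in
/-- One-sided Abel summation: if the tail sums of `w` are nonnegative and `x` is nondecreasing,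
replacing `x` on a tail by its first value there does not increase the weighted sum. -/
lemma mul_tail_sum_le (n : ℕ) (w x : ℕ → ℝ)
    (hw : ∀ i ∈ Icc 1 n, 0 ≤ ∑ j ∈ Icc i n, w j)
    (hx : ∀ i, 1 ≤ i → i < n → x i ≤ x (i + 1)) (m : ℕ) (hm : 1 ≤ m) (hmn : m ≤ n) :
    x m * ∑ j ∈ Icc m n, w j ≤ ∑ j ∈ Icc m n, w j * x j := by
  induction hmn using Nat.decreasingInduction with
  | self => simp [mul_comm]
  | of_succ k hk ih =>
    have ih := ih (by omega)
    have h0 := hw (k + 1) (by simp; omega)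
    have h1 := mul_le_mul_of_nonneg_right (hx k hm hk) h0
    rw [← add_sum_Ioc_eq_sum_Icc (by omega : k ≤ n), ← add_sum_Ioc_eq_sum_Icc (by omega : k ≤ n),
      ← Icc_add_one_left_eq_Ioc]
    linarith

open Finset in
lemma weighted_sum_nonneg (n : ℕ) (hn : 1 ≤ n) (w x : ℕ → ℝ)
    (hw : ∀ i ∈ Icc 1 n, 0 ≤ ∑ j ∈ Icc i n, w j) (h0 : 0 ≤ x 1)
    (hx : ∀ i, 1 ≤ i → i < n → x i ≤ x (i + 1)) :
    0 ≤ ∑ j ∈ Icc 1 n, w j * x j :=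
  (mul_nonneg h0 (hw 1 (by simp [hn]))).trans (mul_tail_sum_le n w x hw hx 1 le_rfl hn)

open Finset in
lemma sum_mul_step (n i : ℕ) (hi : 1 ≤ i) (w : ℕ → ℝ) (c : ℝ) :
    ∑ j ∈ Icc 1 n, w j * (if j < i then 0 else c) = (∑ j ∈ Icc i n, w j) * c := by
  rw [sum_mul]
  symm
  rw [← sum_subset (Icc_subset_Icc_left hi) (f := fun j => w j * (if j < i then 0 else c))]
  · refine sum_congr rfl fun j hj => ?_
    rw [if_neg (by simp at hj; omega)]
  · intro j hj hj'
    rw [if_pos (by simp at hj hj'; omega), mul_zero]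

open Finset in
lemma tail_card (n i : ℕ) (hi : i ≤ n) : ∑ _j ∈ Icc i n, (1 : ℝ) = (n : ℝ) - i + 1 := by
  rw [sum_const, Nat.card_Icc, nsmul_eq_mul, mul_one, Nat.cast_sub (by omega)]
  push_cast
  ring

open Finset in
/-- Feasibility and value of the vector equal to `0` before `i` and to the constant exhausting
the budget `K` from `i` on. -/
lemma step_feasible (n : ℕ) (z : ℕ → ℝ) (K : ℝ) (hK : 0 < K) (i : ℕ) (hi : i ∈ Icc 1 n)
    (hS : 0 < ∑ j ∈ Icc i n, z j) (x : ℕ → ℝ)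
    (hx : ∀ j, x j = if j < i then 0 else K / ∑ j' ∈ Icc i n, z j') :
    0 ≤ x 1 ∧ (∀ j, 1 ≤ j → j < n → x j ≤ x (j + 1)) ∧
      (∑ j ∈ Icc 1 n, z j * x j) ≤ K ∧
      (∑ j ∈ Icc 1 n, x j) = K * ((n : ℝ) - i + 1) / ∑ j ∈ Icc i n, z j := by
  obtain ⟨hi1, hin⟩ := mem_Icc.mp hi
  have hc : 0 ≤ K / ∑ j' ∈ Icc i n, z j' := (div_pos hK hS).le
  refine ⟨?_, fun j _ _ => ?_, ?_, ?_⟩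
  · rw [hx]
    split_ifs <;> simp [hc]
  · rw [hx, hx]
    split_ifs
    · exact le_rfl
    · exact hc
    · omega
    · exact le_rfl
  · simp_rw [hx]
    rw [sum_mul_step n i hi1, mul_div_cancel₀ _ hS.ne']
  · simp_rw [hx]
    have h := sum_mul_step n i hi1 (fun _ => 1) (K / ∑ j' ∈ Icc i n, z j')
    simp only [one_mul] at h
    rw [h, tail_card n i hin]
    ring

open Finset in
/-- for `z 1, …, z n > 0` and `K > 0`, the maximum of
`∑_{i=1}^n x i` over all `x` with `0 ≤ x 1 ≤ x 2 ≤ ⋯ ≤ x n` and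
`∑_{i=1}^n z i · x i ≤ K` equals
`max_{1 ≤ i ≤ n} K·(n − i + 1)/(z i + ⋯ + z n)`; moreover, for any index `i`
attaining this maximum, it is achieved by setting `x j = 0` for `j < i` and
`x j = K/(z i + ⋯ + z n)` for `j ≥ i`. -/
theorem lp_without_upper_bounds (n : ℕ) (hn : 1 ≤ n) (z : ℕ → ℝ) (K : ℝ)
    (hz : ∀ i ∈ Icc 1 n, 0 < z i) (hK : 0 < K) :
    IsGreatest
      {s : ℝ | ∃ x : ℕ → ℝ, 0 ≤ x 1 ∧ (∀ i, 1 ≤ i → i < n → x i ≤ x (i + 1)) ∧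
        (∑ i ∈ Icc 1 n, z i * x i) ≤ K ∧ s = ∑ i ∈ Icc 1 n, x i}
      ((Icc 1 n).sup' (Finset.nonempty_Icc.mpr hn)
        (fun i => K * ((n : ℝ) - i + 1) / ∑ j ∈ Icc i n, z j)) ∧
    ∀ i ∈ Icc 1 n,
      K * ((n : ℝ) - i + 1) / (∑ j ∈ Icc i n, z j) =
        (Icc 1 n).sup' (Finset.nonempty_Icc.mpr hn)
          (fun i' => K * ((n : ℝ) - i' + 1) / ∑ j ∈ Icc i' n, z j) →
      ∀ x : ℕ → ℝ, (∀ j, x j = if j < i then 0 else K / ∑ j' ∈ Icc i n, z j') →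
        (0 ≤ x 1 ∧ (∀ j, 1 ≤ j → j < n → x j ≤ x (j + 1)) ∧
          (∑ j ∈ Icc 1 n, z j * x j) ≤ K ∧
          (∑ j ∈ Icc 1 n, x j) =
            (Icc 1 n).sup' (Finset.nonempty_Icc.mpr hn)
              (fun i' => K * ((n : ℝ) - i' + 1) / ∑ j ∈ Icc i' n, z j)) := by
  have hS : ∀ i ∈ Icc 1 n, 0 < ∑ j ∈ Icc i n, z j := fun i hi => by
    obtain ⟨hi1, hin⟩ := mem_Icc.mp hi
    exact sum_pos (fun j hj => hz j (Icc_subset_Icc_left hi1 hj)) (nonempty_Icc.mpr hin)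
  refine ⟨⟨?_, ?_⟩, ?_⟩
  · obtain ⟨i, hi, hmax⟩ := exists_mem_eq_sup' (nonempty_Icc.mpr hn)
      (fun i : ℕ => K * ((n : ℝ) - i + 1) / ∑ j ∈ Icc i n, z j)
    obtain ⟨h1, h2, h3, h4⟩ := step_feasible n z K hK i hi (hS i hi) _ fun _ => rfl
    exact ⟨_, h1, h2, h3, hmax.trans h4.symm⟩
  · rintro s ⟨x, h0, hx, hzx, rfl⟩
    set M := (Icc 1 n).sup' (nonempty_Icc.mpr hn)
      (fun i : ℕ => K * ((n : ℝ) - i + 1) / ∑ j ∈ Icc i n, z j)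
    have hM : ∀ i ∈ Icc 1 n, K * ((n : ℝ) - i + 1) / ∑ j ∈ Icc i n, z j ≤ M := fun i hi =>
      le_sup' (fun i : ℕ => K * ((n : ℝ) - i + 1) / ∑ j ∈ Icc i n, z j) hi
    have hM0 : 0 ≤ M := by
      have h1 : 1 ∈ Icc 1 n := by simp [hn]
      refine le_trans (div_nonneg (mul_nonneg hK.le ?_) (hS 1 h1).le) (hM 1 h1)
      simp
    have key := weighted_sum_nonneg n hn (fun j => M * z j - K * 1) x (fun i hi => by
      rw [sum_sub_distrib, ← mul_sum, ← mul_sum, tail_card n i (mem_Icc.mp hi).2]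
      exact sub_nonneg.mpr ((div_le_iff₀ (hS i hi)).mp (hM i hi))) h0 hx
    simp only [mul_one, sub_mul, mul_assoc, sum_sub_distrib, ← mul_sum] at key
    have hMK := mul_le_mul_of_nonneg_left hzx hM0
    exact le_of_mul_le_mul_left (by linarith : K * ∑ i ∈ Icc 1 n, x i ≤ K * M) hK
  · intro i hi hmax x hx
    rw [← hmax]
    exact step_feasible n z K hK i hi (hS i hi) x hx
end
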